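/- arXiv:2205.14024 — 5 statements merged into one kernel-verified Lean document; each statement's English description precedes it below -/
import Mathlib

section
/- Let d ≥ 1 be an integer and let β ∈ (0, d). There exists a constant C > 0, depending only on d and β, such that for every t > 0 and every x ∈ ℝ^d with x ≠ 0, ∫_{ℝ^d} p_t(x − y) ‖y‖^{−β} dy ≤ C ‖x‖^{−β}. -/
open MeasureTheory

noncomputable def heatKernel (d : ℕ) (t : ℝ) (x : EuclideanSpace ℝ (Fin d)) : ℝ :=
  (2 * Real.pi * t) ^ (-(d : ℝ) / 2) * Real.exp (-‖x‖ ^ 2 / (2 * t))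

def box (d : ℕ) (R : ℝ) : Set (EuclideanSpace ℝ (Fin d)) :=
  {x | ∀ i, |x i| ≤ R}

lemma heatKernel_integral (d : ℕ) (t : ℝ) (ht : 0 < t) :
    ∫ y : EuclideanSpace ℝ (Fin d), heatKernel d t y = 1 := by
  unfold heatKernel
  rw [integral_const_mul]
  have h := GaussianFourier.integral_rexp_neg_mul_sq_norm (V := EuclideanSpace ℝ (Fin d))
    (b := 1 / (2 * t)) (by positivity)
  have e : (fun v : EuclideanSpace ℝ (Fin d) => Real.exp (-‖v‖ ^ 2 / (2 * t)))
      = fun v => Real.exp (-(1 / (2 * t)) * ‖v‖ ^ 2) := by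
    funext v; congr 1; ring
  rw [e, h, finrank_euclideanSpace_fin]
  have : Real.pi / (1 / (2 * t)) = 2 * Real.pi * t := by field_simp
  rw [this, neg_div, ← Real.rpow_add (by positivity)]
  simp

lemma riesz_integrable (d : ℕ) (hd : 1 ≤ d) (β : ℝ) (hβd : β < d) :
    Integrable (fun y : EuclideanSpace ℝ (Fin d) =>
      (Set.Iio (1 : ℝ)).indicator (fun r : ℝ => r ^ (-β)) ‖y‖) := by
  have : Nonempty (Fin d) := ⟨⟨0, hd⟩⟩
  rw [integrable_fun_norm_addHaar (volume : Measure (EuclideanSpace ℝ (Fin d)))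
    (f := (Set.Iio (1 : ℝ)).indicator (fun r : ℝ => r ^ (-β)))]
  rw [finrank_euclideanSpace_fin]
  have h1 : IntegrableOn (fun r : ℝ => r ^ ((d : ℝ) - 1 - β)) (Set.Ioo 0 1) := by
    rw [intervalIntegral.integrableOn_Ioo_rpow_iff one_pos]; linarith
  have h2 := h1.integrable_indicator measurableSet_Ioo
  refine h2.integrableOn.congr_fun ?_ measurableSet_Ioi
  intro r hr
  have hr : 0 < r := hr
  by_cases h : r < 1
  · simp only [Set.indicator, Set.mem_Ioo, Set.mem_Iio, hr, h, and_self, if_true, smul_eq_mul]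
    rw [← Real.rpow_natCast, ← Real.rpow_add hr]
    congr 1
    push_cast [Nat.cast_sub hd]
    ring
  · simp [Set.indicator, h]

lemma heatKernel_le (d : ℕ) (hd : 1 ≤ d) (t : ℝ) (ht : 0 < t) (R : ℝ) (hR : 0 < R)
    (z : EuclideanSpace ℝ (Fin d)) (hz : R / 2 ≤ ‖z‖) :
    heatKernel d t z ≤ (Real.pi / (2 * d)) ^ (-(d : ℝ) / 2) * R ^ (-(d : ℝ)) := by
  have hd' : (0 : ℝ) < d := by exact_mod_cast hd
  have hpi := Real.pi_pos
  unfold heatKernel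
  have h1 : Real.exp (-‖z‖ ^ 2 / (2 * t)) ≤ (R ^ 2 / (4 * t * d)) ^ (-(d : ℝ) / 2) := by
    have hb : 0 < R ^ 2 / (4 * t * d) := by positivity
    have h2 : R ^ 2 / (4 * t * d) ≤ Real.exp (R ^ 2 / (4 * t * d)) := by
      linarith [Real.add_one_le_exp (R ^ 2 / (4 * t * d))]
    have h3 := Real.rpow_le_rpow_of_nonpos hb h2 (z := -(d : ℝ) / 2) (by
      have : 0 < (d : ℝ) / 2 := by positivity
      linarith [neg_div (2 : ℝ) (d : ℝ)])
    refine le_trans ?_ h3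
    rw [← Real.exp_mul]
    apply Real.exp_le_exp.mpr
    have : R ^ 2 / (4 * t * d) * (-(d : ℝ) / 2) = -(R / 2) ^ 2 / (2 * t) := by
      field_simp; ring
    rw [this]
    gcongr
  calc _ ≤ (2 * Real.pi * t) ^ (-(d : ℝ) / 2) * (R ^ 2 / (4 * t * d)) ^ (-(d : ℝ) / 2) := by
        gcongr
    _ = _ := by
        rw [← Real.mul_rpow (by positivity) (by positivity)]
        have : 2 * Real.pi * t * (R ^ 2 / (4 * t * d)) = Real.pi / (2 * d) * R ^ 2 := by
          field_simp; ring
        rw [this, Real.mul_rpow (by positivity) (by positivity)]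
        congr 1
        rw [← Real.rpow_natCast, ← Real.rpow_mul hR.le]
        congr 1
        push_cast; ring

theorem stmt_0 (d : ℕ) (hd : 1 ≤ d) (β : ℝ) (hβ0 : 0 < β) (hβd : β < d) :
    ∃ C : ℝ, 0 < C ∧ ∀ t : ℝ, 0 < t → ∀ x : EuclideanSpace ℝ (Fin d), x ≠ 0 →
      (∫ y : EuclideanSpace ℝ (Fin d), heatKernel d t (x - y) * ‖y‖ ^ (-β)) ≤
        C * ‖x‖ ^ (-β) := by
  set h : EuclideanSpace ℝ (Fin d) → ℝ := fun y =>
      (Set.Iio (1 : ℝ)).indicator (fun r : ℝ => r ^ (-β)) ‖y‖ with hh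
  have hI : Integrable h := riesz_integrable d hd β hβd
  have hnn : ∀ y, 0 ≤ h y := fun y => by
    simp only [hh, Set.indicator]; split_ifs <;> positivity
  have hd' : (0 : ℝ) < d := by exact_mod_cast hd
  have hpi := Real.pi_pos
  set K : ℝ := (Real.pi / (2 * d)) ^ (-(d : ℝ) / 2) with hK
  have hKpos : 0 < K := by positivity
  have hint0 : 0 ≤ ∫ y, h y := integral_nonneg hnn
  refine ⟨2 ^ β + K * ∫ y, h y, by positivity, ?_⟩
  intro t ht x hx
  have hR : 0 < ‖x‖ := norm_pos_iff.mpr hx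
  set R := ‖x‖ with hRdef
  have hp0 : ∀ z, 0 ≤ heatKernel d t z := fun z => by unfold heatKernel; positivity
  have hpint : Integrable (heatKernel d t) :=
    integrable_of_integral_eq_one (heatKernel_integral d t ht)
  have hg1 : Integrable (fun y => heatKernel d t (x - y)) := hpint.comp_sub_left x
  have hg2 : Integrable (fun y => h (R⁻¹ • y)) := hI.comp_smul (inv_ne_zero hR.ne')
  have key : ∀ y, heatKernel d t (x - y) * ‖y‖ ^ (-β) ≤
      2 ^ β * R ^ (-β) * heatKernel d t (x - y) + K * R ^ (-(d : ℝ)) * R ^ (-β) * h (R⁻¹ • y) := by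
    intro y
    by_cases hy : R / 2 ≤ ‖y‖
    · have h1 : ‖y‖ ^ (-β) ≤ 2 ^ β * R ^ (-β) := by
        have := Real.rpow_le_rpow_of_nonpos (by positivity) hy (z := -β) (by linarith)
        refine this.trans_eq ?_
        rw [Real.div_rpow hR.le (by norm_num), Real.rpow_neg (by norm_num : (0 : ℝ) ≤ 2)]
        field_simp
      have h2 := mul_le_mul_of_nonneg_left h1 (hp0 (x - y))
      have h3 : 0 ≤ K * R ^ (-(d : ℝ)) * R ^ (-β) * h (R⁻¹ • y) :=
        mul_nonneg (by positivity) (hnn _)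
      linarith
    · push Not at hy
      have hz : R / 2 ≤ ‖x - y‖ := by
        have := norm_sub_norm_le x y
        linarith
      have h1 := heatKernel_le d hd t ht R hR (x - y) hz
      have h2 : R ^ (-β) * h (R⁻¹ • y) = ‖y‖ ^ (-β) := by
        have hn : ‖R⁻¹ • y‖ = R⁻¹ * ‖y‖ := by
          rw [norm_smul, Real.norm_of_nonneg (by positivity)]
        have hlt : R⁻¹ * ‖y‖ < 1 := by
          rw [inv_mul_lt_iff₀ hR]; linarith
        simp only [hh, hn, Set.indicator, Set.mem_Iio, hlt, if_true]
        rw [← Real.mul_rpow hR.le (by positivity)]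
        congr 1
        field_simp
      rw [mul_assoc (K * R ^ (-(d : ℝ))) (R ^ (-β)), h2]
      have h3 : 0 ≤ 2 ^ β * R ^ (-β) * heatKernel d t (x - y) :=
        mul_nonneg (by positivity) (hp0 _)
      have h4 := mul_le_mul_of_nonneg_right h1 (by positivity : 0 ≤ ‖y‖ ^ (-β))
      linarith
  have hmono := integral_mono_of_nonneg (μ := volume)
    (Filter.Eventually.of_forall fun y => mul_nonneg (hp0 (x - y)) (by positivity : 0 ≤ ‖y‖ ^ (-β)))
    ((hg1.const_mul (2 ^ β * R ^ (-β))).add (hg2.const_mul (K * R ^ (-(d : ℝ)) * R ^ (-β))))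
    (Filter.Eventually.of_forall key)
  refine hmono.trans_eq ?_
  simp only [Pi.add_apply]
  rw [integral_add (hg1.const_mul _) (hg2.const_mul _), integral_const_mul, integral_const_mul,
    integral_sub_left_eq_self (heatKernel d t) volume x, heatKernel_integral d t ht,
    Measure.integral_comp_inv_smul_of_nonneg volume h hR.le, finrank_euclideanSpace_fin,
    smul_eq_mul, Real.rpow_neg hR.le (d : ℝ), Real.rpow_natCast]
  field_simp
end

section
/- Let d ≥ 1 be an integer and let β ∈ (0, d). There exists a constant C > 0, depending only on d and β, such that for all t₁, t₂ > 0 and all x₁, x₂ ∈ ℝ^d with x₁ ≠ x₂, ∫_{ℝ^d} ∫_{ℝ^d} p_{t₁}(x₁ − y) p_{t₂}(x₂ − z) ‖y − z‖^{−β} dy dz ≤ C ‖x₁ − x₂‖^{−β}. -/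
open MeasureTheory

lemma heat_nonneg (d : ℕ) (t : ℝ) (ht : 0 < t) (x : EuclideanSpace ℝ (Fin d)) :
    0 ≤ heatKernel d t x := by
  unfold heatKernel; positivity

lemma heat_integral (d : ℕ) (t : ℝ) (ht : 0 < t) :
    ∫ x : EuclideanSpace ℝ (Fin d), heatKernel d t x = 1 := by
  have h := GaussianFourier.integral_rexp_neg_mul_sq_norm (V := EuclideanSpace ℝ (Fin d))
    (b := 1 / (2 * t)) (by positivity)
  have h2 : ∀ x : EuclideanSpace ℝ (Fin d), heatKernel d t x =
      (2 * Real.pi * t) ^ (-(d : ℝ) / 2) * Real.exp (-(1 / (2 * t)) * ‖x‖ ^ 2) := by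
    intro x
    unfold heatKernel
    congr 2
    ring
  simp_rw [h2]
  rw [integral_const_mul, h, finrank_euclideanSpace_fin]
  have : Real.pi / (1 / (2 * t)) = 2 * Real.pi * t := by field_simp
  rw [this, ← Real.rpow_add (by positivity)]
  have : -(d : ℝ) / 2 + d / 2 = 0 := by ring
  rw [this, Real.rpow_zero]

lemma heat_integrable (d : ℕ) (t : ℝ) (ht : 0 < t) :
    Integrable (fun x : EuclideanSpace ℝ (Fin d) => heatKernel d t x) := by
  by_contra h
  have := heat_integral d t ht
  rw [integral_undef h] at this
  exact zero_ne_one this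

lemma heat_bound (d : ℕ) (hd : 1 ≤ d) (t : ℝ) (ht : 0 < t) (ρ : ℝ) (hρ : 0 < ρ)
    (x : EuclideanSpace ℝ (Fin d)) (hx : ρ ≤ ‖x‖) :
    heatKernel d t x ≤ ((d : ℝ) / 2 / Real.pi) ^ ((d : ℝ) / 2) * (ρ ^ d)⁻¹ := by
  have hd' : (0 : ℝ) < d := by exact_mod_cast hd
  set a : ℝ := (d : ℝ) / 2 with ha
  have ha0 : 0 < a := by positivity
  set s : ℝ := ρ ^ 2 / (2 * t) with hs
  have hs0 : 0 < s := by positivity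
  have h1 : Real.exp (-‖x‖ ^ 2 / (2 * t)) ≤ Real.exp (-s) := by
    apply Real.exp_le_exp.mpr
    rw [hs, neg_div]
    gcongr
  have h2 : (2 * Real.pi * t) ^ (-(d : ℝ) / 2) = (s / Real.pi) ^ a * (ρ ^ d)⁻¹ := by
    have e : 2 * Real.pi * t = (s / Real.pi)⁻¹ * ρ ^ 2 := by
      rw [hs]; field_simp
    have e2 : -(d : ℝ) / 2 = -a := by rw [ha]; ring
    rw [e, e2, Real.mul_rpow (by positivity) (by positivity), Real.inv_rpow (by positivity),
      Real.rpow_neg (by positivity), inv_inv, Real.rpow_neg (by positivity), ← Real.rpow_natCast ρ 2,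
      ← Real.rpow_mul hρ.le, ← Real.rpow_natCast ρ d]
    congr 3
    rw [ha]; push_cast; ring
  have h3 : (s / Real.pi) ^ a ≤ (a / Real.pi) ^ a * Real.exp s := by
    have : s / Real.pi ≤ a / Real.pi * Real.exp (s / a) := by
      have h := Real.add_one_le_exp (s / a)
      have : s ≤ a * Real.exp (s / a) := by
        calc s = a * (s / a) := by field_simp
          _ ≤ _ := by gcongr; linarith
      calc s / Real.pi ≤ (a * Real.exp (s / a)) / Real.pi := by gcongr
        _ = _ := by ring
    calc (s / Real.pi) ^ a ≤ (a / Real.pi * Real.exp (s / a)) ^ a := by gcongr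
      _ = _ := by
        rw [Real.mul_rpow (by positivity) (by positivity), ← Real.exp_mul]
        congr 2
        field_simp
  unfold heatKernel
  rw [h2]
  calc _ ≤ ((a / Real.pi) ^ a * Real.exp s) * (ρ ^ d)⁻¹ * Real.exp (-s) := by gcongr
    _ = (a / Real.pi) ^ a * (ρ ^ d)⁻¹ * (Real.exp s * Real.exp (-s)) := by ring
    _ = _ := by rw [← Real.exp_add]; simp

/-- The Riesz kernel cut off to the unit ball. -/
noncomputable def cutRiesz (d : ℕ) (β : ℝ) : EuclideanSpace ℝ (Fin d) → ℝ :=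
  (Metric.ball 0 1).indicator (fun y => ‖y‖ ^ (-β))

lemma cutRiesz_nonneg (d : ℕ) (β : ℝ) (y : EuclideanSpace ℝ (Fin d)) : 0 ≤ cutRiesz d β y :=
  Set.indicator_nonneg (fun _ _ => by positivity) _

lemma cutRiesz_integrable (d : ℕ) (hd : 1 ≤ d) (β : ℝ) (hβd : β < d) :
    Integrable (cutRiesz d β) := by
  haveI : Nonempty (Fin d) := ⟨⟨0, hd⟩⟩
  unfold cutRiesz
  rw [integrable_indicator_iff measurableSet_ball]
  rw [integrableOn_fun_norm_addHaar volume (f := fun r : ℝ => r ^ (-β))]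
  rw [finrank_euclideanSpace_fin]
  have h : IntegrableOn (fun x : ℝ => x ^ ((d : ℝ) - 1 - β)) (Set.Ioo 0 1) := by
    rw [intervalIntegral.integrableOn_Ioo_rpow_iff zero_lt_one]
    linarith
  refine h.congr_fun ?_ measurableSet_Ioo
  intro y hy
  simp only [smul_eq_mul]
  rw [← Real.rpow_natCast, ← Real.rpow_add hy.1, Nat.cast_sub hd]
  simp [sub_eq_add_neg]

lemma one_step (d : ℕ) (hd : 1 ≤ d) (β : ℝ) (hβ0 : 0 < β) (hβd : β < d) :
    ∃ K : ℝ, 0 < K ∧ ∀ t : ℝ, 0 < t → ∀ x w : EuclideanSpace ℝ (Fin d), x ≠ w →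
      Integrable (fun y => heatKernel d t (x - y) * ‖y - w‖ ^ (-β)) ∧
      ∫ y, heatKernel d t (x - y) * ‖y - w‖ ^ (-β) ≤ K * ‖x - w‖ ^ (-β) := by
  set M : ℝ := ((d : ℝ) / 2 / Real.pi) ^ ((d : ℝ) / 2) with hM
  have hM0 : 0 ≤ M := by positivity
  set I : ℝ := ∫ y, cutRiesz d β y with hI
  have hI0 : 0 ≤ I := integral_nonneg (cutRiesz_nonneg d β)
  refine ⟨2 ^ β * (1 + M * I), by positivity, ?_⟩
  intro t ht x w hxw
  have hr : 0 < ‖x - w‖ := norm_pos_iff.mpr (sub_ne_zero.mpr hxw)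
  set ρ : ℝ := ‖x - w‖ / 2 with hρdef
  have hρ : 0 < ρ := by positivity
  set g : EuclideanSpace ℝ (Fin d) → ℝ := fun y =>
    ρ ^ (-β) * heatKernel d t (x - y) +
      (M * (ρ ^ d)⁻¹ * ρ ^ (-β)) * cutRiesz d β (ρ⁻¹ • (y - w)) with hg
  have i1 : Integrable (fun y => heatKernel d t (x - y)) :=
    (heat_integrable d t ht).comp_sub_left x
  have i2 : Integrable (fun y => cutRiesz d β (ρ⁻¹ • (y - w))) :=
    (((cutRiesz_integrable d hd β hβd).comp_smul (inv_ne_zero hρ.ne')).comp_sub_right w)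
  have ig : Integrable g := (i1.const_mul _).add (i2.const_mul _)
  have e1 : ∫ y, heatKernel d t (x - y) = 1 := by
    rw [integral_sub_left_eq_self (fun y => heatKernel d t y), heat_integral d t ht]
  have e2 : ∫ y, cutRiesz d β (ρ⁻¹ • (y - w)) = ρ ^ d * I := by
    rw [integral_sub_right_eq_self (fun y => cutRiesz d β (ρ⁻¹ • y)) w,
      Measure.integral_comp_smul, finrank_euclideanSpace_fin, abs_of_pos (by positivity)]
    simp [hI]
  have eg : ∫ y, g y = 2 ^ β * (1 + M * I) * ‖x - w‖ ^ (-β) := by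
    have e3 : ρ ^ (-β) = 2 ^ β * ‖x - w‖ ^ (-β) := by
      rw [hρdef, Real.div_rpow hr.le (by norm_num), Real.rpow_neg (by norm_num : (0:ℝ) ≤ 2)]
      field_simp
    rw [hg, integral_add (i1.const_mul _) (i2.const_mul _), integral_const_mul,
      integral_const_mul, e1, e2, e3]
    field_simp
  have f0 : ∀ y, 0 ≤ heatKernel d t (x - y) * ‖y - w‖ ^ (-β) := fun y =>
    mul_nonneg (heat_nonneg d t ht _) (by positivity)
  have fg : ∀ y, heatKernel d t (x - y) * ‖y - w‖ ^ (-β) ≤ g y := by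
    intro y
    have hk := heat_nonneg d t ht (x - y)
    have hc := cutRiesz_nonneg d β (ρ⁻¹ • (y - w))
    by_cases hy : ρ ≤ ‖y - w‖
    · have : ‖y - w‖ ^ (-β) ≤ ρ ^ (-β) :=
        Real.rpow_le_rpow_of_nonpos hρ hy (by linarith)
      calc _ ≤ heatKernel d t (x - y) * ρ ^ (-β) := by gcongr
        _ = ρ ^ (-β) * heatKernel d t (x - y) + 0 := by ring
        _ ≤ g y := by
          simp only [hg]
          gcongr
          positivity
    · push Not at hy
      have hxy : ρ ≤ ‖x - y‖ := by
        have := norm_add_le (x - y) (y - w)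
        rw [sub_add_sub_cancel] at this
        linarith
      have hcut : ρ ^ (-β) * cutRiesz d β (ρ⁻¹ • (y - w)) = ‖y - w‖ ^ (-β) := by
        unfold cutRiesz
        have hn : ‖ρ⁻¹ • (y - w)‖ = ρ⁻¹ * ‖y - w‖ := by
          rw [norm_smul, Real.norm_of_nonneg (by positivity)]
        rw [Set.indicator_of_mem, hn, ← Real.mul_rpow hρ.le (by positivity)]
        · congr 1
          field_simp
        · rw [mem_ball_zero_iff, hn, inv_mul_lt_iff₀ hρ]
          linarith
      have hb := heat_bound d hd t ht ρ hρ (x - y) hxy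
      calc _ ≤ M * (ρ ^ d)⁻¹ * ‖y - w‖ ^ (-β) := by gcongr
        _ = 0 + (M * (ρ ^ d)⁻¹ * ρ ^ (-β)) * cutRiesz d β (ρ⁻¹ • (y - w)) := by
          rw [← hcut]; ring
        _ ≤ g y := by
          simp only [hg]
          gcongr
          positivity
  have iff' : Integrable (fun y => heatKernel d t (x - y) * ‖y - w‖ ^ (-β)) := by
    refine ig.mono' ?_ (Filter.Eventually.of_forall fun y => ?_)
    · refine i1.aestronglyMeasurable.mul ?_
      exact (by fun_prop : Measurable fun y : EuclideanSpace ℝ (Fin d) =>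
        ‖y - w‖ ^ (-β)).aestronglyMeasurable
    · rw [Real.norm_of_nonneg (f0 y)]
      exact fg y
  exact ⟨iff', (integral_mono iff' ig fg).trans eg.le⟩

theorem stmt_4 (d : ℕ) (hd : 1 ≤ d) (β : ℝ) (hβ0 : 0 < β) (hβd : β < d) :
    ∃ C : ℝ, 0 < C ∧ ∀ t₁ t₂ : ℝ, 0 < t₁ → 0 < t₂ →
      ∀ x₁ x₂ : EuclideanSpace ℝ (Fin d), x₁ ≠ x₂ →
      (∫ y : EuclideanSpace ℝ (Fin d), ∫ z : EuclideanSpace ℝ (Fin d),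
          heatKernel d t₁ (x₁ - y) * heatKernel d t₂ (x₂ - z) * ‖y - z‖ ^ (-β)) ≤
        C * ‖x₁ - x₂‖ ^ (-β) := by
  obtain ⟨K, hK, h⟩ := one_step d hd β hβ0 hβd
  haveI : Nonempty (Fin d) := ⟨⟨0, hd⟩⟩
  refine ⟨K * K, by positivity, ?_⟩
  intro t₁ t₂ ht₁ ht₂ x₁ x₂ hx
  obtain ⟨hi, hle⟩ := h t₁ ht₁ x₁ x₂ hx
  have hne : ∀ᵐ y : EuclideanSpace ℝ (Fin d), y ≠ x₂ := by
    simp [ae_iff]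
  calc _ ≤ ∫ y, K * (heatKernel d t₁ (x₁ - y) * ‖y - x₂‖ ^ (-β)) := by
        refine integral_mono_of_nonneg (Filter.Eventually.of_forall fun y => ?_)
          (hi.const_mul K) ?_
        · exact integral_nonneg fun z => mul_nonneg
            (mul_nonneg (heat_nonneg d t₁ ht₁ _) (heat_nonneg d t₂ ht₂ _)) (by positivity)
        · filter_upwards [hne] with y hy
          have h2 := (h t₂ ht₂ x₂ y hy.symm).2
          have hk := heat_nonneg d t₁ ht₁ (x₁ - y)
          simp_rw [mul_assoc, integral_const_mul, norm_sub_rev y]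
          calc _ ≤ heatKernel d t₁ (x₁ - y) * (K * ‖x₂ - y‖ ^ (-β)) := by gcongr
            _ = _ := by ring
    _ = K * ∫ y, (heatKernel d t₁ (x₁ - y) * ‖y - x₂‖ ^ (-β)) := integral_const_mul _ _
    _ ≤ K * (K * ‖x₁ - x₂‖ ^ (-β)) := by gcongr
    _ = _ := by ring
end

section
/- Let d ≥ 1 be an integer and let β ∈ (0, d). There exists a constant C > 0, depending only on d and β, such that for all t₁, t₂ > 0 and all R > 0, ∫_{Q_R × Q_R} ∫_{ℝ^d} ∫_{ℝ^d} p_{t₁}(x₁ − y) p_{t₂}(x₂ − z) ‖y − z‖^{−β} dy dz dx₁ dx₂ ≤ C R^{2d−β}. -/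
open MeasureTheory

section helpers

variable {d : ℕ}

lemma measurableSet_box (R : ℝ) : MeasurableSet (box d R) := by
  unfold box
  have : {x : EuclideanSpace ℝ (Fin d) | ∀ i, |x i| ≤ R} = ⋂ i, {x | |x i| ≤ R} := by
    ext x; simp
  rw [this]
  refine MeasurableSet.iInter fun i => ?_
  apply measurableSet_le _ measurable_const
  fun_prop

lemma smul_mem_box {R : ℝ} (hR : 0 < R) (x : EuclideanSpace ℝ (Fin d)) :
    R • x ∈ box d R ↔ x ∈ box d 1 := by
  simp only [box, Set.mem_setOf_eq, PiLp.smul_apply, smul_eq_mul, abs_mul, abs_of_pos hR]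
  refine forall_congr' fun i => ?_
  exact mul_le_iff_le_one_right hR

lemma volume_box_lt_top : volume (box d 1) < ⊤ := by
  have : box d 1 ⊆ Metric.closedBall (0 : EuclideanSpace ℝ (Fin d)) (Real.sqrt d) := by
    intro x hx
    rw [mem_closedBall_zero_iff, EuclideanSpace.norm_eq]
    apply Real.sqrt_le_sqrt
    calc ∑ i, ‖x i‖ ^ 2 ≤ ∑ i : Fin d, (1 : ℝ) := by
          refine Finset.sum_le_sum fun i _ => ?_
          have := hx i
          rw [Real.norm_eq_abs]
          exact pow_le_one₀ (abs_nonneg _) this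
      _ = d := by simp
  exact (measure_mono this).trans_lt measure_closedBall_lt_top

lemma lintegral_scale {R : ℝ} (hR : 0 < R) (g : EuclideanSpace ℝ (Fin d) → ENNReal)
    (hg : Measurable g) :
    ∫⁻ x, g x = ENNReal.ofReal (R ^ d) * ∫⁻ x, g (R • x) := by
  have h1 : ∫⁻ x, g (R • x) = ∫⁻ x, g x ∂(Measure.map (R • ·) volume) :=
    (lintegral_map hg (by fun_prop)).symm
  rw [h1, Measure.map_addHaar_smul _ hR.ne', lintegral_smul_measure, smul_eq_mul, ← mul_assoc,
    ← ENNReal.ofReal_mul (by positivity), finrank_euclideanSpace_fin, abs_of_pos (by positivity),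
    mul_inv_cancel₀ (by positivity)]
  simp

lemma volume_box {R : ℝ} (hR : 0 < R) :
    volume (box d R) = ENNReal.ofReal (R ^ d) * volume (box d 1) := by
  rw [← lintegral_indicator_one (measurableSet_box R),
    ← lintegral_indicator_one (measurableSet_box 1),
    lintegral_scale hR _ (measurable_one.indicator (measurableSet_box R))]
  congr 1
  refine lintegral_congr fun x => ?_
  by_cases hx : x ∈ box d 1
  · simp [Set.indicator, smul_mem_box hR, hx]
  · simp [Set.indicator, smul_mem_box hR, hx]

noncomputable def riesz (d : ℕ) (β : ℝ) (x : EuclideanSpace ℝ (Fin d)) : ENNReal :=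
  ENNReal.ofReal (‖x‖ ^ (-β))

lemma measurable_riesz (β : ℝ) : Measurable (riesz d β) := by
  unfold riesz; fun_prop

lemma riesz_ball (hd : 1 ≤ d) {β : ℝ} (hβd : β < d) :
    ∫⁻ x in Metric.ball (0 : EuclideanSpace ℝ (Fin d)) 1, riesz d β x < ⊤ := by
  haveI : Nonempty (Fin d) := ⟨⟨0, hd⟩⟩
  have h : IntegrableOn (fun x : EuclideanSpace ℝ (Fin d) => ‖x‖ ^ (-β)) (Metric.ball 0 1) := by
    rw [integrableOn_fun_norm_addHaar volume (f := fun r : ℝ => r ^ (-β))]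
    have h2 : IntegrableOn (fun y : ℝ => y ^ ((d : ℝ) - 1 - β)) (Set.Ioo 0 1) := by
      rw [intervalIntegral.integrableOn_Ioo_rpow_iff one_pos]; linarith
    refine h2.congr_fun (fun y hy => ?_) measurableSet_Ioo
    simp only [finrank_euclideanSpace_fin, smul_eq_mul]
    rw [← Real.rpow_natCast, ← Real.rpow_add hy.1, Nat.cast_sub hd]
    congr 1
    push_cast
    ring
  exact h.lintegral_lt_top

lemma riesz_box_one (hd : 1 ≤ d) {β : ℝ} (hβ0 : 0 < β) (hβd : β < d) :
    ∃ M : ENNReal, M < ⊤ ∧ ∀ a, ∫⁻ x in box d 1, riesz d β (x - a) ≤ M := by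
  refine ⟨(∫⁻ x in Metric.ball (0 : EuclideanSpace ℝ (Fin d)) 1, riesz d β x) + volume (box d 1),
    ENNReal.add_lt_top.2 ⟨riesz_ball hd hβd, volume_box_lt_top⟩, fun a => ?_⟩
  have hm : Measurable ((Metric.ball (0 : EuclideanSpace ℝ (Fin d)) 1).indicator (riesz d β)) :=
    (measurable_riesz β).indicator Metric.isOpen_ball.measurableSet
  calc ∫⁻ x in box d 1, riesz d β (x - a)
      ≤ ∫⁻ x in box d 1, ((Metric.ball 0 1).indicator (riesz d β) (x - a) + 1) := by
        refine lintegral_mono fun x => ?_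
        by_cases h : x - a ∈ Metric.ball (0 : EuclideanSpace ℝ (Fin d)) 1
        · simp [Set.indicator_of_mem h]
        · simp only [Set.indicator_of_notMem h, zero_add]
          rw [mem_ball_zero_iff, not_lt] at h
          exact ENNReal.ofReal_le_one.2 (Real.rpow_le_one_of_one_le_of_nonpos h (by linarith))
    _ = (∫⁻ x in box d 1, (Metric.ball 0 1).indicator (riesz d β) (x - a)) + volume (box d 1) := by
        rw [lintegral_add_right _ measurable_const]; simp
    _ ≤ (∫⁻ x, (Metric.ball 0 1).indicator (riesz d β) (x - a)) + volume (box d 1) := by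
        gcongr; exact Measure.restrict_le_self
    _ = _ := by
        rw [lintegral_sub_right_eq_self _ a, lintegral_indicator Metric.isOpen_ball.measurableSet]

lemma riesz_box {β : ℝ} {M : ENNReal}
    (hM : ∀ a, ∫⁻ x in box d 1, riesz d β (x - a) ≤ M) {R : ℝ} (hR : 0 < R)
    (a : EuclideanSpace ℝ (Fin d)) :
    ∫⁻ x in box d R, riesz d β (x - a) ≤ ENNReal.ofReal (R ^ ((d : ℝ) - β)) * M := by
  have hm : ∀ b, Measurable fun x => riesz d β (x - b) := fun b =>
    (measurable_riesz β).comp (measurable_id.sub_const b)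
  rw [← lintegral_indicator (measurableSet_box R),
    lintegral_scale hR _ ((hm a).indicator (measurableSet_box R))]
  have : ∀ x, (box d R).indicator (fun x => riesz d β (x - a)) (R • x) =
      ENNReal.ofReal (R ^ (-β)) * (box d 1).indicator (fun x => riesz d β (x - R⁻¹ • a)) x := by
    intro x
    by_cases hx : x ∈ box d 1
    · rw [Set.indicator_of_mem hx, Set.indicator_of_mem ((smul_mem_box hR x).2 hx)]
      have : R • x - a = R • (x - R⁻¹ • a) := by
        rw [smul_sub, smul_inv_smul₀ hR.ne']
      unfold riesz
      rw [this, norm_smul, Real.norm_of_nonneg hR.le, Real.mul_rpow hR.le (norm_nonneg _),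
        ENNReal.ofReal_mul (by positivity)]
    · rw [Set.indicator_of_notMem hx, Set.indicator_of_notMem (by rwa [smul_mem_box hR]), mul_zero]
  simp_rw [this]
  rw [lintegral_const_mul _ ((hm _).indicator (measurableSet_box 1)), ← mul_assoc,
    ← ENNReal.ofReal_mul (by positivity), lintegral_indicator (measurableSet_box 1),
    ← Real.rpow_natCast, ← Real.rpow_add hR, ← sub_eq_add_neg]
  gcongr
  exact hM _

noncomputable def heatE (d : ℕ) (t : ℝ) (x : EuclideanSpace ℝ (Fin d)) : ENNReal :=
  ENNReal.ofReal (heatKernel d t x)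

lemma measurable_heatE (t : ℝ) : Measurable (heatE d t) := by
  unfold heatE heatKernel; fun_prop

lemma heatKernel_nonneg {t : ℝ} (ht : 0 < t) (x) : 0 ≤ heatKernel d t x := by
  unfold heatKernel; positivity

lemma lintegral_heatE {t : ℝ} (ht : 0 < t) : ∫⁻ x, heatE d t x = 1 := by
  have hb : 0 < 1 / (2 * t) := by positivity
  have h1 := GaussianFourier.integral_rexp_neg_mul_sq_norm (V := EuclideanSpace ℝ (Fin d)) hb
  have e : ∀ x, heatKernel d t x =
      (2 * Real.pi * t) ^ (-(d : ℝ) / 2) * Real.exp (-(1 / (2 * t)) * ‖x‖ ^ 2) := by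
    intro x; unfold heatKernel; congr 2; ring
  have hi : Integrable (fun x : EuclideanSpace ℝ (Fin d) =>
      Real.exp (-(1 / (2 * t)) * ‖x‖ ^ 2)) := by
    by_contra hn
    rw [integral_undef hn] at h1
    have : 0 < (Real.pi / (1 / (2 * t))) ^
      (Module.finrank ℝ (EuclideanSpace ℝ (Fin d)) / 2 : ℝ) := by positivity
    linarith
  have hi2 : Integrable (heatKernel d t) := by
    rw [funext e]; exact hi.const_mul _
  unfold heatE
  rw [← ofReal_integral_eq_lintegral_ofReal hi2 (Filter.Eventually.of_forall (heatKernel_nonneg ht)),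
    funext e, integral_const_mul, h1, finrank_euclideanSpace_fin]
  have : Real.pi / (1 / (2 * t)) = 2 * Real.pi * t := by field_simp
  rw [this, ← Real.rpow_add (by positivity)]
  have : -(d : ℝ) / 2 + d / 2 = 0 := by ring
  simp [this]

lemma main_bound {β : ℝ} {M : ENNReal}
    (hM : ∀ a, ∫⁻ x in box d 1, riesz d β (x - a) ≤ M) {R : ℝ} (hR : 0 < R)
    {t₁ t₂ : ℝ} (ht₁ : 0 < t₁) (ht₂ : 0 < t₂) :
    ∫⁻ p in (box d R) ×ˢ (box d R), ∫⁻ y, ∫⁻ z,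
      heatE d t₁ (p.1 - y) * heatE d t₂ (p.2 - z) * riesz d β (y - z) ≤
    ENNReal.ofReal (R ^ ((d : ℝ) - β)) * M * volume (box d R) := by
  set L := ENNReal.ofReal (R ^ ((d : ℝ) - β)) * M * volume (box d R) with hL
  have mr := measurable_riesz (d := d) β
  have m1 := measurable_heatE (d := d) t₁
  have m2 := measurable_heatE (d := d) t₂
  have key : ∀ y z, ∫⁻ p in (box d R) ×ˢ (box d R), riesz d β (p.1 - y - (p.2 - z)) ≤ L := by
    intro y z
    rw [Measure.volume_eq_prod, ← Measure.prod_restrict, lintegral_prod_symm _ (by fun_prop)]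
    calc _ ≤ ∫⁻ q in box d R, ENNReal.ofReal (R ^ ((d : ℝ) - β)) * M := by
          refine lintegral_mono fun q => ?_
          refine le_trans (le_of_eq ?_) (riesz_box hM hR (y + (q - z)))
          refine lintegral_congr fun x => ?_
          simp only [sub_sub]
      _ = L := by simp [hL]
  have cv : ∀ p : EuclideanSpace ℝ (Fin d) × EuclideanSpace ℝ (Fin d), (∫⁻ y, ∫⁻ z,
      heatE d t₁ (p.1 - y) * heatE d t₂ (p.2 - z) * riesz d β (y - z)) =
      ∫⁻ q : EuclideanSpace ℝ (Fin d) × EuclideanSpace ℝ (Fin d),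
        heatE d t₁ q.1 * heatE d t₂ q.2 * riesz d β (p.1 - q.1 - (p.2 - q.2)) := by
    intro p
    rw [Measure.volume_eq_prod, lintegral_prod _ (by fun_prop),
      ← lintegral_sub_left_eq_self _ p.1]
    refine lintegral_congr fun y => ?_
    rw [← lintegral_sub_left_eq_self _ p.2]
    refine lintegral_congr fun z => ?_
    simp
  simp_rw [cv]
  rw [lintegral_lintegral_swap (by fun_prop)]
  calc _ ≤ ∫⁻ q : EuclideanSpace ℝ (Fin d) × EuclideanSpace ℝ (Fin d),
        heatE d t₁ q.1 * heatE d t₂ q.2 * L := by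
        refine lintegral_mono fun q => ?_
        beta_reduce
        rw [lintegral_const_mul _ (by fun_prop)]
        gcongr
        exact key _ _
    _ = L := by
        rw [lintegral_mul_const _ (by fun_prop), Measure.volume_eq_prod,
          lintegral_prod_mul m1.aemeasurable m2.aemeasurable, lintegral_heatE ht₁,
          lintegral_heatE ht₂]
        simp

end helpers

theorem stmt_5 (d : ℕ) (hd : 1 ≤ d) (β : ℝ) (hβ0 : 0 < β) (hβd : β < d) :
    ∃ C : ℝ, 0 < C ∧ ∀ t₁ t₂ : ℝ, 0 < t₁ → 0 < t₂ → ∀ R : ℝ, 0 < R →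
      (∫ p in (box d R) ×ˢ (box d R),
          ∫ y : EuclideanSpace ℝ (Fin d), ∫ z : EuclideanSpace ℝ (Fin d),
            heatKernel d t₁ (p.1 - y) * heatKernel d t₂ (p.2 - z) * ‖y - z‖ ^ (-β)) ≤
        C * R ^ (2 * (d : ℝ) - β) := by
  obtain ⟨M, hMt, hM⟩ := riesz_box_one hd hβ0 hβd
  refine ⟨(M * volume (box d 1)).toReal + 1, by positivity, ?_⟩
  intro t₁ t₂ ht₁ ht₂ R hR
  have hfin : M * volume (box d 1) ≠ ⊤ := (ENNReal.mul_lt_top hMt volume_box_lt_top).ne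
  have hb := main_bound hM hR ht₁ ht₂
  have hRR : ENNReal.ofReal (R ^ ((d : ℝ) - β)) * M * volume (box d R) =
      ENNReal.ofReal ((M * volume (box d 1)).toReal * R ^ (2 * (d : ℝ) - β)) := by
    have : R ^ (2 * (d : ℝ) - β) = R ^ ((d : ℝ) - β) * R ^ d := by
      rw [← Real.rpow_natCast, ← Real.rpow_add hR]; congr 1; ring
    rw [this, volume_box hR, ENNReal.ofReal_mul ENNReal.toReal_nonneg,
      ENNReal.ofReal_mul (by positivity), ENNReal.ofReal_toReal hfin]
    ring
  rw [hRR] at hb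
  have hpos : 0 ≤ R ^ (2 * (d : ℝ) - β) := by positivity
  refine le_trans ?_ (mul_le_mul_of_nonneg_right (le_add_of_nonneg_right zero_le_one) hpos)
  refine (le_abs_self _).trans ?_
  rw [← ENNReal.ofReal_le_ofReal_iff (by positivity), ← Real.enorm_eq_ofReal_abs]
  refine le_trans ?_ hb
  refine (enorm_integral_le_lintegral_enorm _).trans (lintegral_mono fun p => ?_)
  refine (enorm_integral_le_lintegral_enorm _).trans (lintegral_mono fun y => ?_)
  refine (enorm_integral_le_lintegral_enorm _).trans (lintegral_mono fun z => ?_)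
  have h1 := heatKernel_nonneg ht₁ (p.1 - y)
  have h2 := heatKernel_nonneg ht₂ (p.2 - z)
  rw [Real.enorm_of_nonneg (by positivity), ENNReal.ofReal_mul (by positivity),
    ENNReal.ofReal_mul h1]
  rfl
end

section
/- Let d ≥ 1 be an integer and let β ∈ (0, d). There exists a constant C > 0, depending only on d and β, such that for all t₁, t₂, t₃, t₄ > 0, all R > 0, and all ξ ∈ ℝ^d, ∫_{Q_R × Q_R} ∫_{ℝ^{4d}} p_{t₁}(x₁ − ỹ) p_{t₂}(x₂ − z̃) p_{t₃}(ỹ − z) p_{t₄}(ξ − y) ‖y − ỹ‖^{−β} ‖z − z̃‖^{−β} dỹ dz̃ dy dz dx₁ dx₂ ≤ C R^{2d−2β}. (In the paper this is the bound for the quantity Φ^{(1)}(τ, ξ) governing the first-derivative term, with t₁ = t − s, t₂ = t − r, t₃ = s − r, t₄ = τ − s for 0 < r < s < τ < t.) -/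
open MeasureTheory

abbrev EE (d : ℕ) := EuclideanSpace ℝ (Fin d)

noncomputable def PP (d : ℕ) (t : ℝ) (x : EE d) : ENNReal := ‖heatKernel d t x‖ₑ
noncomputable def KK (d : ℕ) (β : ℝ) (x : EE d) : ENNReal := ‖‖x‖ ^ (-β)‖ₑ

@[fun_prop]
lemma PP_meas (d : ℕ) (t : ℝ) : Measurable (PP d t) := by
  unfold PP heatKernel; fun_prop

@[fun_prop]
lemma KK_meas (d : ℕ) (β : ℝ) : Measurable (KK d β) := by
  unfold KK; fun_prop

lemma PP_int (d : ℕ) (t : ℝ) (ht : 0 < t) : ∫⁻ x, PP d t x = 1 := by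
  have h1 : ∫ x, heatKernel d t x = 1 := by
    unfold heatKernel
    rw [integral_const_mul]
    have := GaussianFourier.integral_rexp_neg_mul_sq_norm (V := EE d) (b := (2 * t)⁻¹)
      (by positivity)
    have h2 : ∀ x : EE d, -‖x‖ ^ 2 / (2 * t) = -(2 * t)⁻¹ * ‖x‖ ^ 2 := by
      intro x; field_simp
    simp_rw [h2]
    rw [this, finrank_euclideanSpace_fin, div_inv_eq_mul,
      show Real.pi * (2 * t) = 2 * Real.pi * t by ring, ← Real.rpow_add (by positivity)]
    rw [show -(d : ℝ) / 2 + d / 2 = 0 by ring, Real.rpow_zero]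
  have h3 := integrable_of_integral_eq_one h1
  have hn : ∀ x, 0 ≤ heatKernel d t x := by intro x; unfold heatKernel; positivity
  have := ofReal_integral_eq_lintegral_ofReal h3 (Filter.Eventually.of_forall hn)
  rw [h1, ENNReal.ofReal_one] at this
  rw [this]
  unfold PP
  refine lintegral_congr fun x => ?_
  rw [Real.enorm_of_nonneg (hn x)]

lemma box_meas (d : ℕ) (R : ℝ) : MeasurableSet (box d R) := by
  have : box d R = ⋂ i, {x | |x i| ≤ R} := by ext; simp [box]
  rw [this]
  refine MeasurableSet.iInter fun i => measurableSet_le (by fun_prop) (by fun_prop)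

lemma box_vol (d : ℕ) : volume (box d 1) < ⊤ := by
  have : box d 1 ⊆ Metric.closedBall 0 (Real.sqrt d) := by
    intro x hx
    rw [mem_closedBall_zero_iff, EuclideanSpace.norm_eq]
    refine Real.sqrt_le_sqrt ?_
    calc ∑ i, ‖x i‖ ^ 2 ≤ ∑ i : Fin d, (1 : ℝ) := by
          refine Finset.sum_le_sum fun i _ => ?_
          have := hx i
          rw [Real.norm_eq_abs]
          exact pow_le_one₀ (abs_nonneg _) this
      _ = d := by simp
  exact (measure_mono this).trans_lt measure_closedBall_lt_top

lemma KK_ball (d : ℕ) (hd : 1 ≤ d) (β : ℝ) (hβd : β < d) :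
    ∫⁻ x in Metric.closedBall (0 : EE d) 1, KK d β x < ⊤ := by
  have h := locallyIntegrable_of_norm_le_rpow (E := EE d) (μ := volume)
    (f := fun x => ‖x‖ ^ (-β)) (C := 1) (α := β) (by simpa using hd) (by simpa using hβd)
    (Filter.Eventually.of_forall fun x => by
      rw [one_mul, Real.norm_of_nonneg (by positivity)])
    (Measurable.aestronglyMeasurable (by fun_prop))
  exact (h.integrableOn_isCompact (isCompact_closedBall 0 1)).2

noncomputable def C0 (d : ℕ) (β : ℝ) : ENNReal :=
  volume (box d 1) + ∫⁻ x in Metric.closedBall (0 : EE d) 1, KK d β x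

lemma KK_box1 (d : ℕ) (β : ℝ) (hβ : 0 < β) (c : EE d) :
    ∫⁻ x in box d 1, KK d β (c - x) ≤ C0 d β := by
  calc ∫⁻ x in box d 1, KK d β (c - x)
      ≤ ∫⁻ x in box d 1, (1 + (Metric.closedBall (0 : EE d) 1).indicator (KK d β) (c - x)) := by
        refine lintegral_mono fun x => ?_
        by_cases h : (c - x) ∈ Metric.closedBall (0 : EE d) 1
        · simp only [Set.indicator_of_mem h]; exact le_add_self
        · simp only [Set.indicator_of_notMem h, add_zero]
          rw [mem_closedBall_zero_iff, not_le] at h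
          unfold KK
          rw [Real.enorm_of_nonneg (by positivity), ← ENNReal.ofReal_one]
          exact ENNReal.ofReal_le_ofReal
            (Real.rpow_le_one_of_one_le_of_nonpos h.le (by linarith))
    _ = volume (box d 1) +
        ∫⁻ x in box d 1, (Metric.closedBall (0 : EE d) 1).indicator (KK d β) (c - x) := by
        rw [lintegral_add_left measurable_const]; simp
    _ ≤ volume (box d 1) +
        ∫⁻ x, (Metric.closedBall (0 : EE d) 1).indicator (KK d β) (c - x) := by
        exact add_le_add_right (setLIntegral_le_lintegral _ _) _
    _ = C0 d β := by
        rw [lintegral_sub_left_eq_self (μ := volume)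
          ((Metric.closedBall (0 : EE d) 1).indicator (KK d β)) c,
          lintegral_indicator measurableSet_closedBall, C0]

lemma KK_box (d : ℕ) (β : ℝ) (hβ : 0 < β) (R : ℝ) (hR : 0 < R) (c : EE d) :
    ∫⁻ x in box d R, KK d β (c - x) ≤ ENNReal.ofReal (R ^ ((d : ℝ) - β)) * C0 d β := by
  set g : EE d → ENNReal := (box d R).indicator (fun x => KK d β (c - x)) with hg
  have hgm : Measurable g := Measurable.indicator (by fun_prop) (box_meas d R)
  have h1 : ∫⁻ x, g (R • x) = ENNReal.ofReal (R ^ (-β)) *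
      ∫⁻ x in box d 1, KK d β (R⁻¹ • c - x) := by
    rw [← lintegral_const_mul _ (by fun_prop), ← lintegral_indicator (box_meas d 1)]
    refine lintegral_congr fun x => ?_
    have hm : R • x ∈ box d R ↔ x ∈ box d 1 := by
      simp only [box, Set.mem_ofPred_eq, PiLp.smul_apply, smul_eq_mul, abs_mul, abs_of_pos hR]
      refine forall_congr' fun i => ?_
      constructor
      · intro h; nlinarith
      · intro h; nlinarith
    by_cases h : x ∈ box d 1
    · rw [hg, Set.indicator_of_mem h, Set.indicator_of_mem (hm.2 h)]
      have : c - R • x = R • (R⁻¹ • c - x) := by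
        rw [smul_sub, smul_inv_smul₀ hR.ne']
      unfold KK
      rw [this, norm_smul, Real.norm_of_nonneg hR.le, Real.mul_rpow hR.le (norm_nonneg _),
        enorm_mul, Real.enorm_of_nonneg (by positivity : 0 ≤ R ^ (-β))]
    · rw [hg, Set.indicator_of_notMem h, Set.indicator_of_notMem (fun h' => h (hm.1 h'))]
  have h2 : ∫⁻ x, g (R • x) = ENNReal.ofReal ((R ^ d)⁻¹) * ∫⁻ x, g x := by
    rw [← lintegral_map hgm (measurable_const_smul R), Measure.map_addHaar_smul _ hR.ne',
      lintegral_smul_measure, finrank_euclideanSpace_fin, abs_of_pos (by positivity),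
      smul_eq_mul]
  have h3 : ∫⁻ x, g x = ENNReal.ofReal (R ^ d) * ∫⁻ x, g (R • x) := by
    rw [h2, ← mul_assoc, ← ENNReal.ofReal_mul (by positivity), mul_inv_cancel₀ (by positivity)]
    simp
  rw [← lintegral_indicator (box_meas d R), ← hg, h3, h1, ← mul_assoc,
    ← ENNReal.ofReal_mul (by positivity), sub_eq_add_neg, Real.rpow_add hR, Real.rpow_natCast]
  gcongr
  exact KK_box1 d β hβ _

lemma key (d : ℕ) (β : ℝ) (hβ : 0 < β) (R : ℝ) (hR : 0 < R) (t s : ℝ) (ht : 0 < t) (hs : 0 < s)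
    (a : EE d) :
    ∫⁻ x in box d R, ∫⁻ w, PP d t (x - w) * ∫⁻ z, PP d s (a - z) * KK d β (z - w) ≤
      ENNReal.ofReal (R ^ ((d : ℝ) - β)) * C0 d β := by
  set M := ENNReal.ofReal (R ^ ((d : ℝ) - β)) * C0 d β
  calc ∫⁻ x in box d R, ∫⁻ w, PP d t (x - w) * ∫⁻ z, PP d s (a - z) * KK d β (z - w)
      = ∫⁻ x in box d R, ∫⁻ w, PP d t w * ∫⁻ z, PP d s (a - z) * KK d β (z + w - x) := by
        refine lintegral_congr fun x => ?_
        rw [← lintegral_sub_left_eq_self (μ := volume) _ x]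
        refine lintegral_congr fun w => ?_
        simp only [sub_sub_cancel, sub_sub_eq_add_sub]
    _ = ∫⁻ w, ∫⁻ x in box d R, PP d t w * ∫⁻ z, PP d s (a - z) * KK d β (z + w - x) := by
        rw [lintegral_lintegral_swap]
        apply Measurable.aemeasurable
        unfold Function.uncurry
        refine Measurable.mul (by fun_prop) ?_
        exact Measurable.lintegral_prod_right'
          (f := fun p : (EE d × EE d) × EE d =>
            PP d s (a - p.2) * KK d β (p.2 + p.1.2 - p.1.1)) (by fun_prop)
    _ = ∫⁻ w, PP d t w * ∫⁻ x in box d R, ∫⁻ z, PP d s (a - z) * KK d β (z + w - x) := by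
        refine lintegral_congr fun w => ?_
        rw [lintegral_const_mul]
        exact Measurable.lintegral_prod_right'
          (f := fun p : EE d × EE d => PP d s (a - p.2) * KK d β (p.2 + w - p.1)) (by fun_prop)
    _ = ∫⁻ w, PP d t w * ∫⁻ z, PP d s (a - z) * ∫⁻ x in box d R, KK d β (z + w - x) := by
        refine lintegral_congr fun w => ?_
        congr 1
        rw [lintegral_lintegral_swap (Measurable.aemeasurable (by unfold Function.uncurry; fun_prop))]
        refine lintegral_congr fun z => ?_
        rw [lintegral_const_mul _ (by fun_prop)]
    _ ≤ ∫⁻ w, PP d t w * ∫⁻ z, PP d s (a - z) * M := by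
        gcongr
        exact KK_box d β hβ R hR _
    _ = M := by
        have e : ∫⁻ z, PP d s (a - z) * M = M := by
          rw [lintegral_mul_const _ (by fun_prop), lintegral_sub_left_eq_self (μ := volume) _ a,
            PP_int d s hs, one_mul]
        rw [e, lintegral_mul_const _ (by fun_prop), PP_int d t ht, one_mul]

lemma main_gen (d : ℕ) (S : Set (EE d)) (p1 p2 p3 p4 k : EE d → ENNReal)
    (m1 : Measurable p1) (m2 : Measurable p2) (m3 : Measurable p3) (m4 : Measurable p4)
    (mk : Measurable k) (ξ : EE d) (M : ENNReal)
    (k1 : ∀ a, ∫⁻ x in S, ∫⁻ w, p2 (x - w) * ∫⁻ z, p3 (a - z) * k (z - w) ≤ M)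
    (k2 : ∫⁻ x in S, ∫⁻ w, p1 (x - w) * ∫⁻ z, p4 (ξ - z) * k (z - w) ≤ M) :
    ∫⁻ x₁ in S, ∫⁻ x₂ in S, ∫⁻ u : EE d, ∫⁻ v : EE d, ∫⁻ y : EE d, ∫⁻ z : EE d,
      p1 (x₁ - u) * p2 (x₂ - v) * p3 (u - z) * p4 (ξ - y) *
        k (y - u) * k (z - v) ≤ M * M := by
  have mA : Measurable fun u : EE d => ∫⁻ y, p4 (ξ - y) * k (y - u) :=
    Measurable.lintegral_prod_right'
      (f := fun p : EE d × EE d => p4 (ξ - p.2) * k (p.2 - p.1)) (by fun_prop)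
  have mB : Measurable fun q : EE d × EE d => ∫⁻ z, p3 (q.1 - z) * k (z - q.2) :=
    Measurable.lintegral_prod_right'
      (f := fun p : (EE d × EE d) × EE d => p3 (p.1.1 - p.2) * k (p.2 - p.1.2))
      (by fun_prop)
  have mB' : ∀ u, Measurable fun v : EE d => ∫⁻ z, p3 (u - z) * k (z - v) :=
    fun u => mB.comp measurable_prodMk_left
  have mD : Measurable fun q : EE d × EE d => ∫⁻ v, p2 (q.1 - v) *
      ∫⁻ z, p3 (q.2 - z) * k (z - v) := by
    refine Measurable.lintegral_prod_right'
      (f := fun p : (EE d × EE d) × EE d => p2 (p.1.1 - p.2) *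
        ∫⁻ z, p3 (p.1.2 - z) * k (z - p.2)) ?_
    refine Measurable.mul (by fun_prop) ?_
    exact mB.comp (g := fun q : EE d × EE d => ∫⁻ z, p3 (q.1 - z) * k (z - q.2))
      (f := fun p : (EE d × EE d) × EE d => (p.1.2, p.2)) (by fun_prop)
  calc _ = ∫⁻ x₁ in S, ∫⁻ x₂ in S, ∫⁻ u : EE d,
        (p1 (x₁ - u) * ∫⁻ y, p4 (ξ - y) * k (y - u)) *
          ∫⁻ v, p2 (x₂ - v) * ∫⁻ z, p3 (u - z) * k (z - v) := by
        refine lintegral_congr fun x₁ => lintegral_congr fun x₂ => lintegral_congr fun u => ?_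
        have m' : Measurable fun v => p2 (x₂ - v) *
            ∫⁻ z, p3 (u - z) * k (z - v) :=
          (by fun_prop : Measurable fun v => p2 (x₂ - v)).mul (mB' u)
        rw [← lintegral_const_mul _ m']
        refine lintegral_congr fun v => ?_
        calc _ = ∫⁻ y, (p1 (x₁ - u) * (p2 (x₂ - v) *
              ∫⁻ z, p3 (u - z) * k (z - v))) * (p4 (ξ - y) * k (y - u)) := by
              refine lintegral_congr fun y => ?_
              calc _ = ∫⁻ z, (p1 (x₁ - u) * p2 (x₂ - v) * (p4 (ξ - y) *
                    k (y - u))) * (p3 (u - z) * k (z - v)) := by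
                    refine lintegral_congr fun z => ?_
                    ring
                _ = _ := by
                    rw [lintegral_const_mul _ (by fun_prop)]; ring
          _ = _ := by
              rw [lintegral_const_mul _ (by fun_prop)]; ring
    _ = ∫⁻ x₁ in S, ∫⁻ u : EE d,
        (p1 (x₁ - u) * ∫⁻ y, p4 (ξ - y) * k (y - u)) *
          ∫⁻ x₂ in S, ∫⁻ v, p2 (x₂ - v) * ∫⁻ z, p3 (u - z) * k (z - v) := by
        refine lintegral_congr fun x₁ => ?_
        rw [lintegral_lintegral_swap]
        · refine lintegral_congr fun u => ?_
          rw [lintegral_const_mul]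
          exact mD.comp measurable_prodMk_right
        · apply Measurable.aemeasurable
          unfold Function.uncurry
          exact ((by fun_prop : Measurable fun p : EE d × EE d => p1 (x₁ - p.2)).mul
            (mA.comp measurable_snd)).mul mD
    _ ≤ ∫⁻ x₁ in S, ∫⁻ u : EE d,
        (p1 (x₁ - u) * ∫⁻ y, p4 (ξ - y) * k (y - u)) * M := by
        gcongr with x₁ u
        exact k1 u
    _ = (∫⁻ x₁ in S, ∫⁻ u : EE d,
        (p1 (x₁ - u) * ∫⁻ y, p4 (ξ - y) * k (y - u))) * M := by
        rw [← lintegral_mul_const]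
        · refine lintegral_congr fun x₁ => ?_
          rw [lintegral_mul_const]
          exact (by fun_prop : Measurable fun u : EE d => p1 (x₁ - u)).mul mA
        · refine Measurable.lintegral_prod_right' (f := fun p : EE d × EE d =>
            p1 (p.1 - p.2) * ∫⁻ y, p4 (ξ - y) * k (y - p.2)) ?_
          exact Measurable.mul (by fun_prop) (mA.comp measurable_snd)
    _ ≤ M * M := by
        gcongr

lemma main_lint (d : ℕ) (β : ℝ) (hβ : 0 < β) (R : ℝ) (hR : 0 < R) (t₁ t₂ t₃ t₄ : ℝ)
    (h₁ : 0 < t₁) (h₂ : 0 < t₂) (h₃ : 0 < t₃) (h₄ : 0 < t₄) (ξ : EE d) :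
    ∫⁻ x₁ in box d R, ∫⁻ x₂ in box d R, ∫⁻ u : EE d, ∫⁻ v : EE d, ∫⁻ y : EE d, ∫⁻ z : EE d,
      PP d t₁ (x₁ - u) * PP d t₂ (x₂ - v) * PP d t₃ (u - z) * PP d t₄ (ξ - y) *
        KK d β (y - u) * KK d β (z - v) ≤
      (ENNReal.ofReal (R ^ ((d : ℝ) - β)) * C0 d β) *
        (ENNReal.ofReal (R ^ ((d : ℝ) - β)) * C0 d β) := by
  exact main_gen d (box d R) _ _ _ _ _ (PP_meas d t₁) (PP_meas d t₂) (PP_meas d t₃) (PP_meas d t₄)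
    (KK_meas d β) ξ _ (fun u => key d β hβ R hR t₂ t₃ h₂ h₃ u) (key d β hβ R hR t₁ t₄ h₁ h₄ ξ)

theorem stmt_8 (d : ℕ) (hd : 1 ≤ d) (β : ℝ) (hβ0 : 0 < β) (hβd : β < d) :
    ∃ C : ℝ, 0 < C ∧ ∀ t₁ t₂ t₃ t₄ : ℝ, 0 < t₁ → 0 < t₂ → 0 < t₃ → 0 < t₄ →
      ∀ R : ℝ, 0 < R → ∀ ξ : EuclideanSpace ℝ (Fin d),
      (∫ x₁ in box d R, ∫ x₂ in box d R,
          ∫ ytil : EuclideanSpace ℝ (Fin d), ∫ ztil : EuclideanSpace ℝ (Fin d),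
          ∫ y : EuclideanSpace ℝ (Fin d), ∫ z : EuclideanSpace ℝ (Fin d),
            heatKernel d t₁ (x₁ - ytil) * heatKernel d t₂ (x₂ - ztil) *
              heatKernel d t₃ (ytil - z) * heatKernel d t₄ (ξ - y) *
              ‖y - ytil‖ ^ (-β) * ‖z - ztil‖ ^ (-β)) ≤
        C * R ^ (2 * (d : ℝ) - 2 * β) := by
  have hfin : C0 d β ≠ ⊤ := (ENNReal.add_lt_top.2 ⟨box_vol d, KK_ball d hd β hβd⟩).ne
  refine ⟨(C0 d β).toReal ^ 2 + 1, by positivity, ?_⟩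
  intro t₁ t₂ t₃ t₄ h₁ h₂ h₃ h₄ R hR ξ
  have hm := main_lint d β hβ0 R hR t₁ t₂ t₃ t₄ h₁ h₂ h₃ h₄ ξ
  set I := ∫ x₁ in box d R, ∫ x₂ in box d R,
          ∫ ytil : EuclideanSpace ℝ (Fin d), ∫ ztil : EuclideanSpace ℝ (Fin d),
          ∫ y : EuclideanSpace ℝ (Fin d), ∫ z : EuclideanSpace ℝ (Fin d),
            heatKernel d t₁ (x₁ - ytil) * heatKernel d t₂ (x₂ - ztil) *
              heatKernel d t₃ (ytil - z) * heatKernel d t₄ (ξ - y) *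
              ‖y - ytil‖ ^ (-β) * ‖z - ztil‖ ^ (-β) with hI
  have hle : ‖I‖ₑ ≤ (ENNReal.ofReal (R ^ ((d : ℝ) - β)) * C0 d β) *
        (ENNReal.ofReal (R ^ ((d : ℝ) - β)) * C0 d β) := by
    refine le_trans ?_ hm
    rw [hI]
    refine (enorm_integral_le_lintegral_enorm _).trans (lintegral_mono fun x₁ => ?_)
    refine (enorm_integral_le_lintegral_enorm _).trans (lintegral_mono fun x₂ => ?_)
    refine (enorm_integral_le_lintegral_enorm _).trans (lintegral_mono fun u => ?_)
    refine (enorm_integral_le_lintegral_enorm _).trans (lintegral_mono fun v => ?_)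
    refine (enorm_integral_le_lintegral_enorm _).trans (lintegral_mono fun y => ?_)
    refine (enorm_integral_le_lintegral_enorm _).trans (lintegral_mono fun z => ?_)
    simp only [enorm_mul, PP, KK, le_refl]
  have hS : R ^ (2 * (d : ℝ) - 2 * β) = R ^ ((d : ℝ) - β) * R ^ ((d : ℝ) - β) := by
    rw [← Real.rpow_add hR]; ring_nf
  have hpos : 0 < R ^ ((d : ℝ) - β) := by positivity
  have h5 := ENNReal.toReal_mono (by finiteness) hle
  rw [toReal_enorm, ENNReal.toReal_mul, ENNReal.toReal_mul, ENNReal.toReal_ofReal hpos.le] at h5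
  rw [hS]
  have h6 := (le_abs_self I).trans h5
  nlinarith [mul_pos hpos hpos]
end

section
/- Let d ≥ 1 be an integer and let β ∈ (0, d). There exists a constant C > 0, depending only on d and β, such that for all R > 0, all t > 0, and all times 0 < s₁ < τ < t and 0 < s₂ < τ, the quantity E_{R,t}(s₁, s₂, τ) := ∫_{Q_R^4} ∫_{ℝ^{6d}} ‖ξ − ξ̃‖^{−β} ‖y₁ − ỹ₁‖^{−β} ‖y₂ − ỹ₂‖^{−β} p_{t−τ}(x₁ − ξ) p_{t−τ}(x₂ − ξ̃) p_{t−s₁}(x₃ − ỹ₁) p_{t−s₂}(x₄ − ỹ₂) p_{τ−s₁}(ξ − y₁) p_{τ−s₂}(y₂ − ξ̃) dỹ₁ dỹ₂ dξ dξ̃ dy₁ dy₂ dx₁ dx₂ dx₃ dx₄ satisfies E_{R,t}(s₁, s₂, τ) ≤ C R^{4d−3β}. -/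
open MeasureTheory

open scoped ENNReal

namespace Aux9

section

set_option synthInstance.maxSize 2000
set_option synthInstance.maxHeartbeats 200000

abbrev EE (d : ℕ) := EuclideanSpace ℝ (Fin d)

noncomputable def ph (d : ℕ) (β : ℝ) (y : EE d) : ℝ≥0∞ := ‖‖y‖ ^ (-β)‖ₑ

noncomputable def hk (d : ℕ) (s : ℝ) (y : EE d) : ℝ≥0∞ := ‖heatKernel d s y‖ₑ

lemma ph_meas (d : ℕ) (β : ℝ) : Measurable (ph d β) := by
  unfold ph; fun_prop

lemma hk_meas (d : ℕ) (s : ℝ) : Measurable (hk d s) := by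
  unfold hk heatKernel; fun_prop

lemma hk_int (d : ℕ) (s : ℝ) (hs : 0 < s) : ∫⁻ y, hk d s y = 1 := by
  have h0 : ∀ y, 0 ≤ heatKernel d s y := by intro y; unfold heatKernel; positivity
  have hI : ∫ y : EE d, heatKernel d s y = 1 := by
    have h := GaussianFourier.integral_rexp_neg_mul_sq_norm (V := EE d) (b := 1 / (2 * s)) (by positivity)
    have e : ∀ y : EE d, heatKernel d s y
        = (2 * Real.pi * s) ^ (-(d : ℝ) / 2) * Real.exp (-(1 / (2 * s)) * ‖y‖ ^ 2) := by
      intro y; unfold heatKernel; congr 2; ring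
    simp_rw [e]
    rw [integral_const_mul, h]
    have : Real.pi / (1 / (2 * s)) = 2 * Real.pi * s := by field_simp
    rw [this, ← Real.rpow_add (by positivity)]
    simp [neg_div]
  have hint : Integrable (fun y : EE d => heatKernel d s y) := by
    by_contra hc
    rw [integral_undef hc] at hI
    exact zero_ne_one hI
  have := ofReal_integral_norm_eq_lintegral_enorm hint
  simp_rw [Real.norm_of_nonneg (h0 _)] at this
  unfold hk
  rw [← this, hI]; simp

lemma box_meas (d : ℕ) (R : ℝ) : MeasurableSet (box d R) := by
  unfold box
  simp only [Set.ofPred_forall]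
  refine MeasurableSet.iInter fun i => ?_
  exact measurableSet_le (by fun_prop) (by fun_prop)

lemma box_fin (d : ℕ) (R : ℝ) : volume (box d R) ≠ ⊤ := by
  have : Bornology.IsBounded (box d R) := by
    rw [isBounded_iff_forall_norm_le]
    refine ⟨√(∑ _i : Fin d, R ^ 2), fun x hx => ?_⟩
    rw [EuclideanSpace.norm_eq]
    refine Real.sqrt_le_sqrt (Finset.sum_le_sum fun i _ => ?_)
    have := hx i
    rw [Real.norm_eq_abs]
    gcongr
  exact this.measure_lt_top.ne

lemma scale (d : ℕ) (R : ℝ) (hR : 0 < R) (f : EE d → ℝ≥0∞) :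
    ∫⁻ x, f x = ENNReal.ofReal (R ^ (d : ℝ)) * ∫⁻ x, f (R • x) := by
  have h := Measure.map_addHaar_smul (volume : Measure (EE d)) hR.ne'
  have h2 : ∫⁻ x, f (R • x) = ∫⁻ x, f x ∂(Measure.map (R • ·) (volume : Measure (EE d))) :=
    ((Homeomorph.smulOfNeZero R hR.ne').measurableEmbedding.lintegral_map f).symm
  rw [h2, h, lintegral_smul_measure, smul_eq_mul, ← mul_assoc, ← ENNReal.ofReal_mul (by positivity)]
  have : R ^ (d : ℝ) * |(R ^ Module.finrank ℝ (EE d))⁻¹| = 1 := by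
    rw [abs_of_pos (by positivity)]
    simp
    field_simp
  rw [this]; simp

lemma box_scale (d : ℕ) (R : ℝ) (hR : 0 < R) (x : EE d) : R • x ∈ box d R ↔ x ∈ box d 1 := by
  unfold box
  simp only [Set.mem_ofPred_eq]
  refine forall_congr' fun i => ?_
  rw [PiLp.smul_apply, smul_eq_mul, abs_mul, abs_of_pos hR]
  constructor <;> intro h <;> nlinarith

lemma box_vol (d : ℕ) (R : ℝ) (hR : 0 < R) :
    volume (box d R) = ENNReal.ofReal (R ^ (d : ℝ)) * volume (box d 1) := by
  rw [← lintegral_indicator_one (box_meas d R), scale d R hR, ← lintegral_indicator_one (box_meas d 1)]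
  congr 2
  ext x
  by_cases hx : x ∈ box d 1
  · rw [Set.indicator_of_mem hx, Set.indicator_of_mem ((box_scale d R hR x).2 hx)]; rfl
  · rw [Set.indicator_of_notMem hx, Set.indicator_of_notMem (mt (box_scale d R hR x).1 hx)]

lemma ph_ball (d : ℕ) (hd : 1 ≤ d) (β : ℝ) (hβd : β < d) :
    ∫⁻ y in Metric.ball (0 : EE d) 1, ph d β y ≠ ⊤ := by
  have : Nonempty (Fin d) := ⟨⟨0, hd⟩⟩
  have h : IntegrableOn (fun y : EE d => ‖y‖ ^ (-β)) (Metric.ball 0 1) volume := by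
    rw [integrableOn_fun_norm_addHaar volume (f := fun r : ℝ => r ^ (-β))]
    have h2 : IntegrableOn (fun y : ℝ => y ^ ((d : ℝ) - 1 - β)) (Set.Ioo 0 1) := by
      have := (intervalIntegral.intervalIntegrable_rpow' (a := 0) (b := 1) (r := (d : ℝ) - 1 - β)
        (by linarith))
      rw [intervalIntegrable_iff_integrableOn_Ioo_of_le zero_le_one] at this
      exact this
    refine h2.congr_fun (fun y hy => ?_) measurableSet_Ioo
    have hy0 : 0 < y := hy.1
    simp only [finrank_euclideanSpace, Fintype.card_fin, smul_eq_mul]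
    rw [← Real.rpow_natCast, ← Real.rpow_add hy0, Nat.cast_sub hd]
    congr 1
    push_cast
    ring
  exact h.2.ne

lemma key (d : ℕ) (hd : 1 ≤ d) (β : ℝ) (hβ0 : 0 < β) (hβd : β < d) :
    ∃ K : ℝ≥0∞, K ≠ ⊤ ∧ ∀ R : ℝ, 0 < R → ∀ z : EE d,
      ∫⁻ x in box d R, ph d β (z - x) ≤ ENNReal.ofReal (R ^ ((d : ℝ) - β)) * K := by
  refine ⟨(∫⁻ y in Metric.ball (0 : EE d) 1, ph d β y) + volume (box d 1),
    ENNReal.add_ne_top.2 ⟨ph_ball d hd β hβd, box_fin d 1⟩, fun R hR z => ?_⟩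
  have unit : ∀ z : EE d, ∫⁻ x in box d 1, ph d β (z - x) ≤
      (∫⁻ y in Metric.ball (0 : EE d) 1, ph d β y) + volume (box d 1) := by
    intro z
    calc ∫⁻ x in box d 1, ph d β (z - x)
        ≤ ∫⁻ x in box d 1, ((Metric.ball (0 : EE d) 1).indicator (ph d β) (z - x) + 1) := by
          refine lintegral_mono fun x => ?_
          by_cases hx : z - x ∈ Metric.ball (0 : EE d) 1
          · simp [Set.indicator_of_mem hx]
          · rw [Set.indicator_of_notMem hx, zero_add]
            have : 1 ≤ ‖z - x‖ := by simpa using hx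
            have h1 : ‖z - x‖ ^ (-β) ≤ 1 := Real.rpow_le_one_of_one_le_of_nonpos this (by linarith)
            unfold ph
            rw [Real.enorm_of_nonneg (by positivity)]
            simpa using h1
      _ = (∫⁻ x in box d 1, (Metric.ball (0 : EE d) 1).indicator (ph d β) (z - x)) +
            volume (box d 1) := by
          rw [lintegral_add_right _ measurable_const]
          simp
      _ ≤ (∫⁻ x, (Metric.ball (0 : EE d) 1).indicator (ph d β) (z - x)) + volume (box d 1) := by
          gcongr
          exact Measure.restrict_le_self
      _ = _ := by
          rw [lintegral_sub_left_eq_self (fun x => (Metric.ball (0 : EE d) 1).indicator (ph d β) x) z,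
            lintegral_indicator measurableSet_ball]
  rw [← lintegral_indicator (box_meas d R), scale d R hR]
  have e : ∀ x : EE d, (box d R).indicator (fun x => ph d β (z - x)) (R • x) =
      ENNReal.ofReal (R ^ (-β)) * (box d 1).indicator (fun x => ph d β (R⁻¹ • z - x)) x := by
    intro x
    by_cases hx : x ∈ box d 1
    · rw [Set.indicator_of_mem hx, Set.indicator_of_mem ((box_scale d R hR x).2 hx)]
      have : z - R • x = R • (R⁻¹ • z - x) := by
        rw [smul_sub, smul_smul, mul_inv_cancel₀ hR.ne', one_smul]
      unfold ph
      rw [this, norm_smul, Real.norm_of_nonneg hR.le, Real.mul_rpow hR.le (norm_nonneg _), enorm_mul,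
        Real.enorm_of_nonneg (by positivity : 0 ≤ R ^ (-β))]
    · rw [Set.indicator_of_notMem hx, Set.indicator_of_notMem (mt (box_scale d R hR x).1 hx),
        mul_zero]
  simp_rw [e]
  rw [lintegral_const_mul' _ _ ENNReal.ofReal_ne_top, lintegral_indicator (box_meas d 1), ← mul_assoc,
    ← ENNReal.ofReal_mul (by positivity), ← Real.rpow_add hR, ← sub_eq_add_neg]
  gcongr
  exact unit _

abbrev WW (d : ℕ) := EE d × EE d × EE d × EE d × EE d × EE d

lemma iter6 (d : ℕ) (f : WW d → ℝ≥0∞) (hf : Measurable f) :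
    ∫⁻ w, f w = ∫⁻ a, ∫⁻ b, ∫⁻ c, ∫⁻ e, ∫⁻ g, ∫⁻ h, f (a, b, c, e, g, h) := by
  rw [Measure.volume_eq_prod, lintegral_prod _ hf.aemeasurable]
  refine lintegral_congr fun a => ?_
  rw [Measure.volume_eq_prod, lintegral_prod _ (by fun_prop)]
  refine lintegral_congr fun b => ?_
  rw [Measure.volume_eq_prod, lintegral_prod _ (by fun_prop)]
  refine lintegral_congr fun c => ?_
  rw [Measure.volume_eq_prod, lintegral_prod _ (by fun_prop)]
  refine lintegral_congr fun e => ?_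
  rw [Measure.volume_eq_prod, lintegral_prod _ (by fun_prop)]

noncomputable def PP (d : ℕ) (u₁ u₂ u₃ u₄ u₅ : ℝ) (w : WW d) : ℝ≥0∞ :=
  hk d u₁ w.1 * (hk d u₂ w.2.1 * (hk d u₃ w.2.2.1 * (hk d u₃ w.2.2.2.1 *
    (hk d u₄ w.2.2.2.2.1 * hk d u₅ w.2.2.2.2.2))))

lemma PP_meas (d : ℕ) (u₁ u₂ u₃ u₄ u₅ : ℝ) : Measurable (PP d u₁ u₂ u₃ u₄ u₅) := by
  have := hk_meas d
  unfold PP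
  fun_prop

lemma PP_int (d : ℕ) (u₁ u₂ u₃ u₄ u₅ : ℝ) (h₁ : 0 < u₁) (h₂ : 0 < u₂) (h₃ : 0 < u₃)
    (h₄ : 0 < u₄) (h₅ : 0 < u₅) : ∫⁻ w, PP d u₁ u₂ u₃ u₄ u₅ w = 1 := by
  rw [iter6 d _ (PP_meas d _ _ _ _ _)]
  have := hk_meas d
  simp only [PP]
  simp (disch := fun_prop) only [lintegral_const_mul, hk_int d _ h₁,
    hk_int d _ h₂, hk_int d _ h₃, hk_int d _ h₄, hk_int d _ h₅, mul_one]

/-- Exchange the integration over the box with that over the noise and bound. -/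
lemma swapBound (d : ℕ) (R β : ℝ) (M : ℝ≥0∞)
    (hM : ∀ z : EE d, ∫⁻ x in box d R, ph d β (z - x) ≤ M)
    (q : WW d → ℝ≥0∞) (hq : Measurable q) (l : WW d → EE d) (hl : Measurable l) :
    ∫⁻ x in box d R, ∫⁻ w, ph d β (l w - x) * q w ≤ M * ∫⁻ w, q w := by
  have hp := ph_meas d β
  rw [lintegral_lintegral_swap (by fun_prop), ← lintegral_const_mul _ hq]
  refine lintegral_mono fun w => ?_
  dsimp only
  rw [lintegral_mul_const _ (by fun_prop)]
  gcongr
  exact hM _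

lemma shift (d : ℕ) (β u₁ u₂ u₃ u₄ u₅ : ℝ) (x₁ x₂ x₃ x₄ : EE d) :
    (∫⁻ a, ∫⁻ b, ∫⁻ ξ, ∫⁻ η, ∫⁻ y, ∫⁻ z,
      ph d β (ξ - η) * ph d β (y - a) * ph d β (z - b) *
        hk d u₃ (x₁ - ξ) * hk d u₃ (x₂ - η) * hk d u₁ (x₃ - a) * hk d u₂ (x₄ - b) *
        hk d u₄ (ξ - y) * hk d u₅ (z - η)) =
    ∫⁻ w : WW d, ph d β ((x₂ - w.2.2.2.1 + w.2.2.2.2.2 + w.2.1) - x₄) *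
      (ph d β ((x₁ - w.2.2.1 - w.2.2.2.2.1 + w.1) - x₃) *
      (ph d β ((x₁ - w.2.2.1 + w.2.2.2.1) - x₂) * PP d u₁ u₂ u₃ u₄ u₅ w)) := by
  have := PP_meas d u₁ u₂ u₃ u₄ u₅
  have hp := ph_meas d β
  rw [iter6 d _ (by fun_prop)]
  rw [← lintegral_sub_left_eq_self _ x₃]
  refine lintegral_congr fun a => ?_
  rw [← lintegral_sub_left_eq_self _ x₄]
  refine lintegral_congr fun b => ?_
  rw [← lintegral_sub_left_eq_self _ x₁]
  refine lintegral_congr fun c => ?_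
  rw [← lintegral_sub_left_eq_self _ x₂]
  refine lintegral_congr fun e => ?_
  rw [← lintegral_sub_left_eq_self _ (x₁ - c)]
  refine lintegral_congr fun y => ?_
  rw [← lintegral_add_left_eq_self _ (x₂ - e)]
  refine lintegral_congr fun z => ?_
  simp only [PP, sub_sub_cancel, add_sub_cancel_left]
  have e1 : x₁ - c - (x₂ - e) = x₁ - c + e - x₂ := by abel
  have e2 : x₁ - c - y - (x₃ - a) = x₁ - c - y + a - x₃ := by abel
  have e3 : x₂ - e + z - (x₄ - b) = x₂ - e + z + b - x₄ := by abel
  rw [e1, e2, e3]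
  ring

lemma main (d : ℕ) (R β : ℝ) (M : ℝ≥0∞)
    (hM : ∀ z : EE d, ∫⁻ x in box d R, ph d β (z - x) ≤ M) (hMt : M ≠ ⊤)
    (u₁ u₂ u₃ u₄ u₅ : ℝ) (h₁ : 0 < u₁) (h₂ : 0 < u₂) (h₃ : 0 < u₃)
    (h₄ : 0 < u₄) (h₅ : 0 < u₅) :
    ∫⁻ x₁ in box d R, ∫⁻ x₂ in box d R, ∫⁻ x₃ in box d R, ∫⁻ x₄ in box d R,
    (∫⁻ a, ∫⁻ b, ∫⁻ ξ, ∫⁻ η, ∫⁻ y, ∫⁻ z,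
      ph d β (ξ - η) * ph d β (y - a) * ph d β (z - b) *
        hk d u₃ (x₁ - ξ) * hk d u₃ (x₂ - η) * hk d u₁ (x₃ - a) * hk d u₂ (x₄ - b) *
        hk d u₄ (ξ - y) * hk d u₅ (z - η)) ≤ M * (M * M) * volume (box d R) := by
  have := PP_meas d u₁ u₂ u₃ u₄ u₅
  have hp := ph_meas d β
  simp only [shift]
  rw [← setLIntegral_const]
  refine lintegral_mono fun x₁ => ?_
  calc _ ≤ ∫⁻ x₂ in box d R, ∫⁻ x₃ in box d R, M * ∫⁻ w : WW d,
            (ph d β ((x₁ - w.2.2.1 - w.2.2.2.2.1 + w.1) - x₃) *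
              (ph d β ((x₁ - w.2.2.1 + w.2.2.2.1) - x₂) * PP d u₁ u₂ u₃ u₄ u₅ w)) := by
          refine lintegral_mono fun x₂ => lintegral_mono fun x₃ => ?_
          exact swapBound d R β M hM _ (by fun_prop) _ (by fun_prop)
    _ ≤ ∫⁻ x₂ in box d R, M * (M * ∫⁻ w : WW d,
              (ph d β ((x₁ - w.2.2.1 + w.2.2.2.1) - x₂) * PP d u₁ u₂ u₃ u₄ u₅ w)) := by
          refine lintegral_mono fun x₂ => ?_
          dsimp only
          rw [lintegral_const_mul' _ _ hMt]
          gcongr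
          exact swapBound d R β M hM _ (by fun_prop) _ (by fun_prop)
    _ ≤ M * (M * (M * ∫⁻ w : WW d, PP d u₁ u₂ u₃ u₄ u₅ w)) := by
          rw [lintegral_const_mul' _ _ hMt, lintegral_const_mul' _ _ hMt]
          gcongr
          exact swapBound d R β M hM _ (by fun_prop) _ (by fun_prop)
    _ = _ := by rw [PP_int d _ _ _ _ _ h₁ h₂ h₃ h₄ h₅, mul_one]

end

end Aux9

open Aux9 in
theorem stmt_9 (d : ℕ) (hd : 1 ≤ d) (β : ℝ) (hβ0 : 0 < β) (hβd : β < d) :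
    ∃ C : ℝ, 0 < C ∧ ∀ R : ℝ, 0 < R → ∀ t τ s₁ s₂ : ℝ,
      0 < s₁ → s₁ < τ → τ < t → 0 < s₂ → s₂ < τ →
      (∫ x₁ in box d R, ∫ x₂ in box d R, ∫ x₃ in box d R, ∫ x₄ in box d R,
          ∫ ytil₁ : EuclideanSpace ℝ (Fin d), ∫ ytil₂ : EuclideanSpace ℝ (Fin d),
          ∫ ξ : EuclideanSpace ℝ (Fin d), ∫ ξtil : EuclideanSpace ℝ (Fin d),
          ∫ y₁ : EuclideanSpace ℝ (Fin d), ∫ y₂ : EuclideanSpace ℝ (Fin d),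
            ‖ξ - ξtil‖ ^ (-β) * ‖y₁ - ytil₁‖ ^ (-β) * ‖y₂ - ytil₂‖ ^ (-β) *
              heatKernel d (t - τ) (x₁ - ξ) * heatKernel d (t - τ) (x₂ - ξtil) *
              heatKernel d (t - s₁) (x₃ - ytil₁) * heatKernel d (t - s₂) (x₄ - ytil₂) *
              heatKernel d (τ - s₁) (ξ - y₁) * heatKernel d (τ - s₂) (y₂ - ξtil)) ≤
        C * R ^ (4 * (d : ℝ) - 3 * β) := by
  obtain ⟨K, hK, hb⟩ := key d hd β hβ0 hβd
  set V := volume (box d 1) with hV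
  have hVt : V ≠ ⊤ := box_fin d 1
  refine ⟨(K * (K * K) * V).toReal + 1, by positivity, ?_⟩
  intro R hR t τ s₁ s₂ hs₁ hs₁τ hτt hs₂ hs₂τ
  have hm := main d R β _ (hb R hR) (ENNReal.mul_ne_top ENNReal.ofReal_ne_top hK)
    (t - s₁) (t - s₂) (t - τ) (τ - s₁) (τ - s₂) (by linarith) (by linarith) (by linarith)
    (by linarith) (by linarith)
  have hfin : K * (K * K) * V ≠ ⊤ := by finiteness
  have hpow : R ^ (4 * (d : ℝ) - 3 * β) =
      R ^ ((d : ℝ) - β) * (R ^ ((d : ℝ) - β) * R ^ ((d : ℝ) - β)) * R ^ (d : ℝ) := by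
    rw [← Real.rpow_add hR, ← Real.rpow_add hR, ← Real.rpow_add hR]
    congr 1; ring
  have hR' : ENNReal.ofReal (R ^ ((d : ℝ) - β)) * K * (ENNReal.ofReal (R ^ ((d : ℝ) - β)) * K *
      (ENNReal.ofReal (R ^ ((d : ℝ) - β)) * K)) * volume (box d R) =
      ENNReal.ofReal ((K * (K * K) * V).toReal * R ^ (4 * (d : ℝ) - 3 * β)) := by
    rw [box_vol d R hR, ENNReal.ofReal_mul ENNReal.toReal_nonneg, ENNReal.ofReal_toReal hfin, hpow,
      ENNReal.ofReal_mul (by positivity), ENNReal.ofReal_mul (by positivity),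
      ENNReal.ofReal_mul (by positivity)]
    ring
  rw [hR'] at hm
  have hpos : 0 ≤ R ^ (4 * (d : ℝ) - 3 * β) := by positivity
  refine le_trans ?_ (mul_le_mul_of_nonneg_right (le_add_of_nonneg_right zero_le_one) hpos)
  refine (ENNReal.ofReal_le_ofReal_iff (by positivity)).1 ?_
  refine le_trans (Real.ofReal_le_enorm _) (le_trans ?_ hm)
  iterate 10
    refine (enorm_integral_le_lintegral_enorm _).trans (lintegral_mono fun _ => ?_)
  simp only [enorm_mul, ph, hk]
  exact le_rfl
end
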